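/- If B_1(Λ) is uncountable, then the blur shift space Σ_Λ (with the subspace topology inherited from the full blur shift Σ) cannot be simultaneously compact and first countable. -/

import Mathlib

open Set Filter Topology

namespace BlurPaper

/-- The extended alphabet `Ā = A ⊕ V`, where each blurred set `H ∈ V` is regarded
as a new symbol `H̃`. -/
abbrev Symb (A : Type*) (V : Set (Set A)) := A ⊕ {H : Set A // H ∈ V}

/-- `V` is a family of blurred sets: every member is infinite and two distinct members
have finite intersection. -/
def IsBlurFamily {A : Type*} (V : Set (Set A)) : Prop :=
  (∀ H ∈ V, H.Infinite) ∧ ∀ G ∈ V, ∀ H ∈ V, G ≠ H → (G ∩ H).Finite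

/-- The full blur shift `Σ`: sequences over `Ā` such that a blur symbol is followed
by the same blur symbol. -/
def FullBlur (A : Type*) (V : Set (Set A)) : Set (ℕ → Symb A V) :=
  {x | ∀ (i : ℕ) (H : {H : Set A // H ∈ V}), x i = Sum.inr H → x (i + 1) = Sum.inr H}

/-- Generalized cylinder `Z(α)`. -/
def Z (A : Type*) (V : Set (Set A)) (α : List A) : Set (FullBlur A V) :=
  {x | ∀ i : Fin α.length, x.1 i = Sum.inl (α.get i)}

/-- Generalized cylinder `Z(α, H, F)`. -/
def ZH (A : Type*) (V : Set (Set A)) (α : List A) (H : {H : Set A // H ∈ V})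
    (F : Set A) : Set (FullBlur A V) :=
  {x | (∀ i : Fin α.length, x.1 i = Sum.inl (α.get i)) ∧
    (x.1 α.length = Sum.inr H ∨ ∃ a ∈ H.1 \ F, x.1 α.length = Sum.inl a)}

/-- The collection of all generalized cylinders. -/
def Cylinders (A : Type*) (V : Set (Set A)) : Set (Set (FullBlur A V)) :=
  {U | ∃ α : List A, U = Z A V α} ∪
  {U | ∃ (α : List A) (H : {H : Set A // H ∈ V}) (F : Set A),
    F ⊆ H.1 ∧ F.Finite ∧ U = ZH A V α H F}

/-- The topology on the full blur shift generated by the generalized cylinders. -/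
def tau (A : Type*) (V : Set (Set A)) : TopologicalSpace (FullBlur A V) :=
  TopologicalSpace.generateFrom (Cylinders A V)

/-- The shift map on the full blur shift. -/
def shift (A : Type*) (V : Set (Set A)) : FullBlur A V → FullBlur A V :=
  fun x => ⟨fun i => x.1 (i + 1), fun i H h => x.2 (i + 1) H h⟩

/-- The shift map on `A^ℕ`. -/
def shiftSeq (A : Type*) : (ℕ → A) → ℕ → A := fun x i => x (i + 1)

/-- The prodiscrete topology on `A^ℕ` (product of discrete topologies). -/
def prodDiscrete (A : Type*) : TopologicalSpace (ℕ → A) :=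
  @Pi.topologicalSpace ℕ (fun _ => A) fun _ => ⊥

/-- A (classical) shift space over `A`: closed in the prodiscrete topology and
invariant under the shift map. -/
def IsShiftSpace {A : Type*} (Λ : Set (ℕ → A)) : Prop :=
  @IsClosed _ (prodDiscrete A) Λ ∧ ∀ x ∈ Λ, shiftSeq A x ∈ Λ

/-- `w ∈ B(Y)`: the finite word `w` appears as an initial word of some element of `Y`. -/
def InLang {A : Type*} (Y : Set (ℕ → A)) (w : List A) : Prop :=
  ∃ x ∈ Y, ∀ i : Fin w.length, x i = w.get i

/-- The follower set `F_Y(w) = {a : w a ∈ B(Y)}`. -/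
def Fol {A : Type*} (Y : Set (ℕ → A)) (w : List A) : Set A :=
  {a | InLang Y (w ++ [a])}

/-- The predecessor set `P_Y(a) = {b : b a ∈ B(Y)}`. -/
def Pred {A : Type*} (Y : Set (ℕ → A)) (a : A) : Set A :=
  {b | InLang Y [b, a]}

/-- `B₁(Y)`: the set of letters occurring in sequences of `Y`. -/
def letters {A : Type*} (Y : Set (ℕ → A)) : Set A :=
  {a | ∃ x ∈ Y, ∃ i, x i = a}

/-- The canonical embedding `A^ℕ → Σ`. -/
def embed (A : Type*) (V : Set (Set A)) : (ℕ → A) → FullBlur A V :=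
  fun x => ⟨fun i => Sum.inl (x i), fun _ _ h => absurd h (by simp)⟩

/-- The point `(a₀ … a_{n-1} H̃ H̃ H̃ …)` of the full blur shift. -/
def wordBlur {A : Type*} {V : Set (Set A)} (α : List A) (H : {H : Set A // H ∈ V}) :
    FullBlur A V :=
  ⟨fun i => if h : i < α.length then Sum.inl (α.get ⟨i, h⟩) else Sum.inr H, by
    intro i K hK
    by_cases h : i < α.length
    · simp only [dif_pos h] at hK
      exact absurd hK (by simp)
    · simp only [dif_neg h] at hK
      simp only [dif_neg (by omega : ¬ i + 1 < α.length)]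
      exact hK⟩

/-- The boundary `∂Y`: points `(a₀ … a_{n-1} H̃ H̃ …)` with `a₀ … a_{n-1} ∈ B(Y)` and
`F_Y(a₀ … a_{n-1}) ∩ H` infinite. -/
def boundary (A : Type*) (V : Set (Set A)) (Y : Set (ℕ → A)) : Set (FullBlur A V) :=
  {z | ∃ (α : List A) (H : {H : Set A // H ∈ V}),
    z = wordBlur α H ∧ InLang Y α ∧ (Fol Y α ∩ H.1).Infinite}

/-- The blur shift space `Σ_Y = Y ∪ ∂Y` of `Y` with resolution `V`. -/
def SigmaOf (A : Type*) (V : Set (Set A)) (Y : Set (ℕ → A)) : Set (FullBlur A V) :=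
  embed A V '' Y ∪ boundary A V Y

/-- The subspace topology inherited from the full blur shift. -/
def subTau (A : Type*) (V : Set (Set A)) (X : Set (FullBlur A V)) :
    TopologicalSpace X :=
  TopologicalSpace.induced Subtype.val (tau A V)

/-- `V_Λ`: the blurred sets that appear in `Σ_Λ`, i.e. those meeting `B₁(Λ)` in an
infinite set. -/
def VLam (A : Type*) (V : Set (Set A)) (Λ : Set (ℕ → A)) : Set (Set A) :=
  {H | H ∈ V ∧ (letters Λ ∩ H).Infinite}


theorem nhds_blur {A : Type*} {V : Set (Set A)} (H : {H : Set A // H ∈ V})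
    (p : FullBlur A V) (hp : p.1 0 = Sum.inr H) (U : Set (FullBlur A V))
    (hU : TopologicalSpace.GenerateOpen (Cylinders A V) U) :
    p ∈ U → ∃ F : Set A, F.Finite ∧ ZH A V [] H F ⊆ U := by
  induction hU with
  | basic s hs =>
    intro hps
    rcases hs with ⟨α, rfl⟩ | ⟨α, K, F, -, hF, rfl⟩
    · cases α with
      | nil => exact ⟨∅, finite_empty, fun x _ i => i.elim0⟩
      | cons a l =>
        have h0 := hps ⟨0, by simp⟩
        simp [hp] at h0
    · cases α with
      | nil =>
        have h0 := hps.2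
        simp only [List.length_nil, hp] at h0
        rcases h0 with h0 | ⟨a, -, h0⟩
        · cases h0
          exact ⟨F, hF, fun x hx => hx⟩
        · cases h0
      | cons a l =>
        have h0 := hps.1 ⟨0, by simp⟩
        simp [hp] at h0
  | univ => exact fun _ => ⟨∅, finite_empty, subset_univ _⟩
  | inter s t _ _ ihs iht =>
    rintro ⟨h1, h2⟩
    obtain ⟨F, hF, hFs⟩ := ihs h1
    obtain ⟨G, hG, hGs⟩ := iht h2
    refine ⟨F ∪ G, hF.union hG, fun x hx => ⟨hFs ⟨hx.1, ?_⟩, hGs ⟨hx.1, ?_⟩⟩⟩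
    · exact hx.2.imp id fun ⟨a, ha, h⟩ => ⟨a, ⟨ha.1, fun h' => ha.2 (Or.inl h')⟩, h⟩
    · exact hx.2.imp id fun ⟨a, ha, h⟩ => ⟨a, ⟨ha.1, fun h' => ha.2 (Or.inr h')⟩, h⟩
  | sUnion S _ ih =>
    rintro ⟨s, hs, hps⟩
    obtain ⟨F, hF, hFs⟩ := ih s hs hps
    exact ⟨F, hF, hFs.trans (subset_sUnion_of_mem hs)⟩

theorem letters_first {A : Type*} (Λ : Set (ℕ → A)) (hΛ : IsShiftSpace Λ) (a : A)
    (ha : a ∈ letters Λ) : ∃ x ∈ Λ, x 0 = a := by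
  obtain ⟨x, hx, i, hi⟩ := ha
  induction i generalizing x with
  | zero => exact ⟨x, hx, hi⟩
  | succ n ih => exact ih _ (hΛ.2 x hx) hi

theorem fol_nil {A : Type*} (Λ : Set (ℕ → A)) (hΛ : IsShiftSpace Λ) :
    Fol Λ [] = letters Λ := by
  ext a
  constructor
  · rintro ⟨x, hx, h⟩
    exact ⟨x, hx, 0, h ⟨0, by simp⟩⟩
  · intro ha
    obtain ⟨x, hx, h⟩ := letters_first Λ hΛ a ha
    refine ⟨x, hx, ?_⟩
    rintro ⟨i, hi⟩
    have : i = 0 := by simpa using hi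
    subst this
    simpa using h

/-- If `B₁(Λ)` is uncountable, then `Σ_Λ` cannot be both compact
and first countable. -/
theorem not_compact_and_firstCountable {A : Type*} (V : Set (Set A))
    (hV : IsBlurFamily V) (Λ : Set (ℕ → A)) (hΛ : IsShiftSpace Λ)
    (hunc : ¬ (letters Λ).Countable) :
    ¬ (@IsCompact _ (tau A V) (SigmaOf A V Λ) ∧
        @FirstCountableTopology (SigmaOf A V Λ) (subTau A V (SigmaOf A V Λ))) := by
  rintro ⟨hc, hf⟩
  letI := tau A V
  have hf' : FirstCountableTopology (SigmaOf A V Λ) := hf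
  have hbd : ∀ H : {H : Set A // H ∈ V}, (letters Λ ∩ H.1).Infinite →
      wordBlur [] H ∈ SigmaOf A V Λ := by
    intro H hH
    refine Or.inr ⟨[], H, rfl, ?_, by rwa [fol_nil Λ hΛ]⟩
    obtain ⟨a, ⟨x, hx, -⟩, -⟩ := hH.nonempty
    exact ⟨x, hx, fun i => i.elim0⟩
  -- the cover
  let c : Symb A V → Set (FullBlur A V) :=
    Sum.elim (fun a => Z A V [a]) (fun H => ZH A V [] H ∅)
  have hco : ∀ s, IsOpen (c s) := by
    rintro (a | H)
    · exact TopologicalSpace.GenerateOpen.basic _ (Or.inl ⟨[a], rfl⟩)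
    · exact TopologicalSpace.GenerateOpen.basic _
        (Or.inr ⟨[], H, ∅, empty_subset _, finite_empty, rfl⟩)
  have hcov : SigmaOf A V Λ ⊆ ⋃ s, c s := by
    intro x _
    refine mem_iUnion.2 ⟨x.1 0, ?_⟩
    rcases h : x.1 0 with a | H
    · rintro ⟨i, hi⟩
      have : i = 0 := by simpa using hi
      subst this
      simpa using h
    · exact ⟨fun i => i.elim0, Or.inl h⟩
  obtain ⟨t, ht⟩ := hc.elim_finite_subcover c hco hcov
  -- some blurred set contains uncountably many letters
  have key : ∃ H : {H : Set A // H ∈ V}, ¬ (letters Λ ∩ H.1).Countable := by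
    by_contra! hall
    apply hunc
    have hsub : letters Λ ⊆ ⋃ s ∈ t, Sum.elim (fun a => ({a} : Set A))
        (fun H : {H : Set A // H ∈ V} => letters Λ ∩ H.1) s := by
      intro a ha
      obtain ⟨x, hx, hxa⟩ := letters_first Λ hΛ a ha
      have hm := ht (Or.inl ⟨x, hx, rfl⟩ : embed A V x ∈ SigmaOf A V Λ)
      simp only [mem_iUnion] at hm ⊢
      obtain ⟨s, hs, hm⟩ := hm
      refine ⟨s, hs, ?_⟩
      rcases s with b | H
      · have h0 : (Sum.inl (x 0) : Symb A V) = Sum.inl b := hm ⟨0, by simp⟩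
        have h1 := Sum.inl.inj h0
        simp [← h1, hxa]
      · refine ⟨ha, ?_⟩
        rcases hm.2 with h | ⟨b, hb, h⟩
        · cases h
        · have h1 : x 0 = b := Sum.inl.inj h
          rw [← hxa, h1]
          exact hb.1
    refine (t.countable_toSet.biUnion ?_).mono hsub
    rintro (a | H) _
    · exact countable_singleton a
    · exact hall H
  obtain ⟨H, hH⟩ := key
  have hinf : (letters Λ ∩ H.1).Infinite := fun h => hH h.countable
  let p : SigmaOf A V Λ := ⟨wordBlur [] H, hbd H hinf⟩
  have hp0 : p.1.1 0 = Sum.inr H := rfl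
  obtain ⟨u, hu⟩ := (𝓝 p).exists_antitone_basis
  have hF : ∀ n, ∃ F : Set A, F.Finite ∧ ∀ y : SigmaOf A V Λ, y.1 ∈ ZH A V [] H F → y ∈ u n := by
    intro n
    obtain ⟨W, hW, hWu⟩ := mem_nhds_induced Subtype.val p (u n) |>.1 (hu.1.mem_of_mem trivial)
    obtain ⟨O, hOW, hO, hpO⟩ := mem_nhds_iff.1 hW
    obtain ⟨F, hF, hFO⟩ := nhds_blur H p.1 hp0 O hO hpO
    exact ⟨F, hF, fun y hy => hWu (hOW (hFO hy))⟩
  choose F hFf hFu using hF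
  apply hH
  refine (countable_iUnion fun n => (hFf n).countable).mono ?_
  rintro a ⟨ha, haH⟩
  have hopen : IsOpen (ZH A V [] H {a}) := TopologicalSpace.GenerateOpen.basic _
    (Or.inr ⟨[], H, {a}, by simpa using haH, finite_singleton a, rfl⟩)
  have hmem : (Subtype.val ⁻¹' (ZH A V [] H {a}) : Set (SigmaOf A V Λ)) ∈ 𝓝 p :=
    (hopen.preimage continuous_subtype_val).mem_nhds ⟨fun i => i.elim0, Or.inl hp0⟩
  obtain ⟨n, -, hn⟩ := hu.1.mem_iff.1 hmem
  refine mem_iUnion.2 ⟨n, ?_⟩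
  by_contra hna
  obtain ⟨x, hx, hxa⟩ := letters_first Λ hΛ a ha
  have h1 := hn (hFu n ⟨embed A V x, Or.inl ⟨x, hx, rfl⟩⟩
    ⟨fun i => i.elim0, Or.inr ⟨a, ⟨haH, hna⟩, congrArg Sum.inl hxa⟩⟩)
  rcases h1.2 with h | ⟨b, hb, h⟩
  · cases h
  · have h2 : x 0 = b := Sum.inl.inj h
    exact hb.2 (by rw [← h2, hxa]; rfl)

end BlurPaper
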